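/- Let c > 0 and define φ(t,s) = (√(t/(c²−t²) + t²s/(c²−t²)²) + √(c²s/(c²−t²)²))². Set U = (sφ + s(t−s)φ_s)/φ and W = (φ_t + φ_s)/φ. Then on the region 0 < s < t < c the quantity K := −(2/φ)·( s(W_t + W_s) − s²(t−s)·W_s²/U_s + W ) equals −4. -/

import Mathlib

open Real

/-- Partial derivative in the second variable `s`. -/
noncomputable def dS (F : ℝ → ℝ → ℝ) (t s : ℝ) : ℝ := deriv (F t) s

/-- Partial derivative in the first variable `t`. -/
noncomputable def dT (F : ℝ → ℝ → ℝ) (t s : ℝ) : ℝ := deriv (fun u => F u s) t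

/-- `U = (sφ + s(t−s)φ_s)/φ`. -/
noncomputable def Uf (φ : ℝ → ℝ → ℝ) (t s : ℝ) : ℝ :=
  (s * φ t s + s * (t - s) * dS φ t s) / φ t s

/-- `W = (φ_t + φ_s)/φ`. -/
noncomputable def Wf (φ : ℝ → ℝ → ℝ) (t s : ℝ) : ℝ :=
  (dT φ t s + dS φ t s) / φ t s

/-- The region `0 < s < t` (with `p = (t, s)`). -/
def Reg : Set (ℝ × ℝ) := {p | 0 < p.2 ∧ p.2 < p.1}

/-- Left-hand side of the weakly Kähler equation. -/
noncomputable def WK (φ : ℝ → ℝ → ℝ) (t s : ℝ) : ℝ :=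
  (φ t s - s * dS φ t s) * (φ t s + (t - s) * dS φ t s) *
    (dS φ t s - dT φ t s + s * (dT (dS φ) t s + dS (dS φ) t s)) +
  s * (t - s) * dS (dS φ) t s *
    (φ t s * (dS φ t s - dT φ t s) + s * dS φ t s * (dT φ t s + dS φ t s))

/-!
Write `D = c² − t²`, `P = D + ts` and `q = √(ts / P)`. The two radicands in `φ` are `tP / D²` and
`(cq / t)² · tP / D²`, so that `φ = P (t + cq)² / (t D²)`. Logarithmic differentiation then gives
`U = cq` and `W = (c (q + 1/q) + 2t) / D`. From `P q² = ts` one gets `W_s = −U_s / (ts)`, which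
makes the quotient `W_s² / U_s` linear in `q_s`; all derivatives of `q` left in the bracket of `K`
combine into `t q_t + (2t − s) q_s = tq / s`, and the bracket becomes `2φ`.
-/

/-- The ratio `√(ts) / √(c² − t² + ts)`. Up to the factor `c / t` it is the quotient of the two
square roots in `φ`, and all invariants of the metric are rational in `c`, `t`, `s` and it. -/
noncomputable def radicalRatio (c t s : ℝ) : ℝ := √(t * s / (c ^ 2 - t ^ 2 + t * s))

section RadicalRatio

variable {c t s : ℝ}

lemma hasDerivAt_sq_sub_sq (c t : ℝ) : HasDerivAt (fun u => c ^ 2 - u ^ 2) (-(2 * t)) t := by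
  simpa using (hasDerivAt_pow 2 t).const_sub (c ^ 2)

lemma hasDerivAt_sq_sub_sq_add_mul_right (c t s : ℝ) :
    HasDerivAt (fun v => c ^ 2 - t ^ 2 + t * v) t s := by
  simpa using ((hasDerivAt_id s).const_mul t).const_add (c ^ 2 - t ^ 2)

lemma hasDerivAt_sq_sub_sq_add_mul_left (c t s : ℝ) :
    HasDerivAt (fun u => c ^ 2 - u ^ 2 + u * s) (-(2 * t) + s) t := by
  simpa using (hasDerivAt_sq_sub_sq c t).fun_add ((hasDerivAt_id t).mul_const s)

lemma radicalRatio_pos (hts : 0 < t * s) (hP : 0 < c ^ 2 - t ^ 2 + t * s) :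
    0 < radicalRatio c t s :=
  Real.sqrt_pos.2 (div_pos hts hP)

lemma radicalRatio_sq_mul (hts : 0 ≤ t * s) (hP : 0 < c ^ 2 - t ^ 2 + t * s) :
    radicalRatio c t s ^ 2 * (c ^ 2 - t ^ 2 + t * s) = t * s := by
  rw [radicalRatio, Real.sq_sqrt (div_nonneg hts hP.le), div_mul_cancel₀ _ hP.ne']

lemma hasDerivAt_radicalRatio_right (hts : 0 < t * s) (hP : 0 < c ^ 2 - t ^ 2 + t * s) :
    HasDerivAt (radicalRatio c t)
      (radicalRatio c t s * (c ^ 2 - t ^ 2) / (2 * s * (c ^ 2 - t ^ 2 + t * s))) s := by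
  have hnum : HasDerivAt (fun v => t * v) t s := by
    simpa using (hasDerivAt_id s).const_mul t
  have hquotient := hnum.div (hasDerivAt_sq_sub_sq_add_mul_right c t s) hP.ne'
  refine (hquotient.sqrt (div_pos hts hP).ne').congr_deriv ?_
  have hq := radicalRatio_pos hts hP
  have hq2 := radicalRatio_sq_mul hts.le hP
  have hs : s ≠ 0 := right_ne_zero_of_mul hts.ne'
  change _ / (2 * radicalRatio c t s) = _
  rw [div_div, div_eq_div_iff (by positivity) (by positivity)]
  linear_combination (-2 * (c ^ 2 - t ^ 2) * (c ^ 2 - t ^ 2 + t * s)) * hq2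

lemma hasDerivAt_radicalRatio_left (hts : 0 < t * s) (hP : 0 < c ^ 2 - t ^ 2 + t * s) :
    HasDerivAt (fun u => radicalRatio c u s)
      (radicalRatio c t s * (c ^ 2 + t ^ 2) / (2 * t * (c ^ 2 - t ^ 2 + t * s))) t := by
  have hnum : HasDerivAt (fun u => u * s) s t := by
    simpa using (hasDerivAt_id t).mul_const s
  have hquotient := hnum.div (hasDerivAt_sq_sub_sq_add_mul_left c t s) hP.ne'
  refine (hquotient.sqrt (div_pos hts hP).ne').congr_deriv ?_
  have hq := radicalRatio_pos hts hP
  have hq2 := radicalRatio_sq_mul hts.le hP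
  have ht : t ≠ 0 := left_ne_zero_of_mul hts.ne'
  change _ / (2 * radicalRatio c t s) = _
  rw [div_div, div_eq_div_iff (by positivity) (by positivity)]
  linear_combination (-2 * (c ^ 2 + t ^ 2) * (c ^ 2 - t ^ 2 + t * s)) * hq2

lemma radicalRatio_transport (hts : 0 < t * s) (hP : 0 < c ^ 2 - t ^ 2 + t * s) :
    t * dT (radicalRatio c) t s + (2 * t - s) * dS (radicalRatio c) t s
      = t * radicalRatio c t s / s := by
  have ht : t ≠ 0 := left_ne_zero_of_mul hts.ne'
  have hs : s ≠ 0 := right_ne_zero_of_mul hts.ne'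
  rw [dT, dS, (hasDerivAt_radicalRatio_left hts hP).deriv,
    (hasDerivAt_radicalRatio_right hts hP).deriv]
  field_simp
  ring

end RadicalRatio

section Congruence

variable {F G : ℝ → ℝ → ℝ} {Ω : Set (ℝ × ℝ)}

lemma eqOn_dS (hΩ : IsOpen Ω) (h : Ω.EqOn (Function.uncurry F) (Function.uncurry G)) :
    Ω.EqOn (Function.uncurry (dS F)) (Function.uncurry (dS G)) := by
  rintro ⟨t, s⟩ hts
  refine Filter.EventuallyEq.deriv_eq ?_
  filter_upwards [(Continuous.prodMk_right t).continuousAt.preimage_mem_nhds (hΩ.mem_nhds hts)]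
    with v hv using h hv

lemma eqOn_dT (hΩ : IsOpen Ω) (h : Ω.EqOn (Function.uncurry F) (Function.uncurry G)) :
    Ω.EqOn (Function.uncurry (dT F)) (Function.uncurry (dT G)) := by
  rintro ⟨t, s⟩ hts
  refine Filter.EventuallyEq.deriv_eq ?_
  filter_upwards [(Continuous.prodMk_left s).continuousAt.preimage_mem_nhds (hΩ.mem_nhds hts)]
    with u hu using h hu

lemma eqOn_Uf (hΩ : IsOpen Ω) (h : Ω.EqOn (Function.uncurry F) (Function.uncurry G)) :
    Ω.EqOn (Function.uncurry (Uf F)) (Function.uncurry (Uf G)) := by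
  rintro ⟨t, s⟩ hts
  have hF : F t s = G t s := h hts
  have hFs : dS F t s = dS G t s := eqOn_dS hΩ h hts
  simp only [Function.uncurry_apply_pair, Uf, hF, hFs]

lemma eqOn_Wf (hΩ : IsOpen Ω) (h : Ω.EqOn (Function.uncurry F) (Function.uncurry G)) :
    Ω.EqOn (Function.uncurry (Wf F)) (Function.uncurry (Wf G)) := by
  rintro ⟨t, s⟩ hts
  have hF : F t s = G t s := h hts
  have hFs : dS F t s = dS G t s := eqOn_dS hΩ h hts
  have hFt : dT F t s = dT G t s := eqOn_dT hΩ h hts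
  simp only [Function.uncurry_apply_pair, Wf, hF, hFs, hFt]

end Congruence

/-- The part of the quadrant `t, s > 0` on which both square roots defining `φ` are smooth and
positive; for `c > 0` it contains the region `0 < s < t < c`. -/
def metricDomain (c : ℝ) : Set (ℝ × ℝ) :=
  {p | 0 < p.1 ∧ 0 < p.2 ∧ c ^ 2 - p.1 ^ 2 ≠ 0 ∧ 0 < c ^ 2 - p.1 ^ 2 + p.1 * p.2}

lemma mem_metricDomain {c t s : ℝ} :
    (t, s) ∈ metricDomain c ↔
      0 < t ∧ 0 < s ∧ c ^ 2 - t ^ 2 ≠ 0 ∧ 0 < c ^ 2 - t ^ 2 + t * s :=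
  Iff.rfl

lemma isOpen_metricDomain (c : ℝ) : IsOpen (metricDomain c) := by
  have hD : Continuous fun p : ℝ × ℝ => c ^ 2 - p.1 ^ 2 := by fun_prop
  exact (isOpen_lt continuous_const continuous_fst).inter <|
    (isOpen_lt continuous_const continuous_snd).inter <|
      (isOpen_ne_fun hD continuous_const).inter <|
        isOpen_lt continuous_const (hD.add (continuous_fst.mul continuous_snd))

/-- The metric function `φ` with its square factored through `radicalRatio`. -/
noncomputable def factoredMetric (c t s : ℝ) : ℝ :=
  (c ^ 2 - t ^ 2 + t * s) * (t + c * radicalRatio c t s) ^ 2 / (t * (c ^ 2 - t ^ 2) ^ 2)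

/-- The invariant `W` of the metric, in terms of `radicalRatio`. -/
noncomputable def explicitW (c t s : ℝ) : ℝ :=
  (c * (radicalRatio c t s + (radicalRatio c t s)⁻¹) + 2 * t) / (c ^ 2 - t ^ 2)

section Metric

variable {c t s : ℝ}

lemma sqrt_add_sqrt_sq_eq_factoredMetric (hc : 0 ≤ c) (h : (t, s) ∈ metricDomain c) :
    (√(t / (c ^ 2 - t ^ 2) + t ^ 2 * s / (c ^ 2 - t ^ 2) ^ 2) +
      √(c ^ 2 * s / (c ^ 2 - t ^ 2) ^ 2)) ^ 2 = factoredMetric c t s := by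
  obtain ⟨ht, hs, hD, hP⟩ := mem_metricDomain.1 h
  have hq2 := radicalRatio_sq_mul (mul_pos ht hs).le hP
  set q := radicalRatio c t s with hq_def
  have hq : 0 < q := radicalRatio_pos (mul_pos ht hs) hP
  have hfirst : t / (c ^ 2 - t ^ 2) + t ^ 2 * s / (c ^ 2 - t ^ 2) ^ 2
      = t * (c ^ 2 - t ^ 2 + t * s) / (c ^ 2 - t ^ 2) ^ 2 := by
    field_simp
  have hsecond : c ^ 2 * s / (c ^ 2 - t ^ 2) ^ 2
      = (c * q / t) ^ 2 * (t * (c ^ 2 - t ^ 2 + t * s) / (c ^ 2 - t ^ 2) ^ 2) := by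
    field_simp
    linear_combination (-c ^ 2) * hq2
  rw [hfirst, hsecond, Real.sqrt_mul (sq_nonneg _), Real.sqrt_sq (by positivity),
    ← one_add_mul, mul_pow, Real.sq_sqrt (by positivity), factoredMetric, ← hq_def]
  field_simp

lemma factoredMetric_pos (hc : 0 ≤ c) (h : (t, s) ∈ metricDomain c) :
    0 < factoredMetric c t s := by
  obtain ⟨ht, hs, hD, hP⟩ := mem_metricDomain.1 h
  have hq := radicalRatio_pos (mul_pos ht hs) hP
  unfold factoredMetric
  positivity

lemma dS_factoredMetric_div_self (hc : 0 ≤ c) (h : (t, s) ∈ metricDomain c) :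
    dS (factoredMetric c) t s / factoredMetric c t s =
      radicalRatio c t s * (c + t * radicalRatio c t s) /
        (s * (t + c * radicalRatio c t s)) := by
  obtain ⟨ht, hs, hD, hP⟩ := mem_metricDomain.1 h
  have hts := mul_pos ht hs
  have hq2 := radicalRatio_sq_mul hts.le hP
  have hq := radicalRatio_pos hts hP
  have hsum : t + c * radicalRatio c t s ≠ 0 := by positivity
  have hP_s := hasDerivAt_sq_sub_sq_add_mul_right c t s
  have hsum_s := ((hasDerivAt_radicalRatio_right hts hP).const_mul c).const_add t
  calc dS (factoredMetric c) t s / factoredMetric c t s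
      = logDeriv (fun v => (c ^ 2 - t ^ 2 + t * v) * (t + c * radicalRatio c t v) ^ 2 /
          (t * (c ^ 2 - t ^ 2) ^ 2)) s := rfl
    _ = t / (c ^ 2 - t ^ 2 + t * s) +
        2 * (c * (radicalRatio c t s * (c ^ 2 - t ^ 2) / (2 * s * (c ^ 2 - t ^ 2 + t * s))) /
          (t + c * radicalRatio c t s)) := by
      simp only [div_eq_mul_inv _ (t * (c ^ 2 - t ^ 2) ^ 2)]
      rw [logDeriv_mul_const _ _ (by positivity),
        logDeriv_mul _ (by exact hP.ne') (by exact pow_ne_zero 2 hsum) hP_s.differentiableAt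
          (hsum_s.differentiableAt.fun_pow 2),
        logDeriv_fun_pow hsum_s.differentiableAt, logDeriv_apply, logDeriv_apply, hP_s.deriv,
        hsum_s.deriv, Nat.cast_ofNat]
    _ = _ := by
      field_simp
      grind

lemma dT_factoredMetric_div_self (hc : 0 ≤ c) (h : (t, s) ∈ metricDomain c) :
    dT (factoredMetric c) t s / factoredMetric c t s =
      4 * t / (c ^ 2 - t ^ 2) +
        (2 - (c ^ 2 + t ^ 2) / (c ^ 2 - t ^ 2 + t * s)) / (t + c * radicalRatio c t s) := by
  obtain ⟨ht, hs, hD, hP⟩ := mem_metricDomain.1 h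
  have hts := mul_pos ht hs
  have hq := radicalRatio_pos hts hP
  have hsum : t + c * radicalRatio c t s ≠ 0 := by positivity
  have hD_t := hasDerivAt_sq_sub_sq c t
  have hP_t := hasDerivAt_sq_sub_sq_add_mul_left c t s
  have hsum_t := (hasDerivAt_id' t).fun_add ((hasDerivAt_radicalRatio_left hts hP).const_mul c)
  calc dT (factoredMetric c) t s / factoredMetric c t s
      = logDeriv (fun u => (c ^ 2 - u ^ 2 + u * s) * (u + c * radicalRatio c u s) ^ 2 /
          (u * (c ^ 2 - u ^ 2) ^ 2)) t := rfl
    _ = (-(2 * t) + s) / (c ^ 2 - t ^ 2 + t * s) +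
        2 * ((1 + c * (radicalRatio c t s * (c ^ 2 + t ^ 2) /
          (2 * t * (c ^ 2 - t ^ 2 + t * s)))) / (t + c * radicalRatio c t s)) -
        (1 / t + 2 * (-(2 * t) / (c ^ 2 - t ^ 2))) := by
      rw [logDeriv_div _ (by exact mul_ne_zero hP.ne' (pow_ne_zero 2 hsum))
          (by exact mul_ne_zero ht.ne' (pow_ne_zero 2 hD))
          (hP_t.differentiableAt.fun_mul (hsum_t.differentiableAt.fun_pow 2))
          (differentiableAt_fun_id.fun_mul (hD_t.differentiableAt.fun_pow 2)),
        logDeriv_mul _ (by exact hP.ne') (by exact pow_ne_zero 2 hsum) hP_t.differentiableAt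
          (hsum_t.differentiableAt.fun_pow 2),
        logDeriv_mul _ (by exact ht.ne') (by exact pow_ne_zero 2 hD) differentiableAt_fun_id
          (hD_t.differentiableAt.fun_pow 2),
        logDeriv_fun_pow hsum_t.differentiableAt, logDeriv_fun_pow hD_t.differentiableAt,
        logDeriv_id', logDeriv_apply, logDeriv_apply, logDeriv_apply, hP_t.deriv,
        hsum_t.deriv, hD_t.deriv, Nat.cast_ofNat]
    _ = _ := by
      field_simp
      ring

lemma Uf_factoredMetric (hc : 0 ≤ c) (h : (t, s) ∈ metricDomain c) :
    Uf (factoredMetric c) t s = c * radicalRatio c t s := by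
  have hφ := factoredMetric_pos hc h
  have hlog := dS_factoredMetric_div_self hc h
  obtain ⟨ht, hs, -, hP⟩ := mem_metricDomain.1 h
  have hts := mul_pos ht hs
  have hq2 := radicalRatio_sq_mul hts.le hP
  have hq := radicalRatio_pos hts hP
  rw [Uf, add_div, mul_div_cancel_right₀ _ hφ.ne', mul_div_assoc, hlog]
  field_simp
  linear_combination -hq2

lemma Wf_factoredMetric (hc : 0 ≤ c) (h : (t, s) ∈ metricDomain c) :
    Wf (factoredMetric c) t s = explicitW c t s := by
  rw [Wf, add_div, dS_factoredMetric_div_self hc h, dT_factoredMetric_div_self hc h, explicitW]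
  obtain ⟨ht, hs, hD, hP⟩ := mem_metricDomain.1 h
  have hts := mul_pos ht hs
  have hq2 := radicalRatio_sq_mul hts.le hP
  have hq := radicalRatio_pos hts hP
  field_simp
  grind

lemma dS_explicitW (h : (t, s) ∈ metricDomain c) :
    dS (explicitW c) t s = -(c * dS (radicalRatio c) t s) / (t * s) := by
  obtain ⟨ht, hs, hD, hP⟩ := mem_metricDomain.1 h
  have hts := mul_pos ht hs
  have hq2 := radicalRatio_sq_mul hts.le hP
  have hq := radicalRatio_pos hts hP
  have hq' := (hasDerivAt_radicalRatio_right hts hP).differentiableAt.hasDerivAt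
  have hderiv := ((((hq'.add (hq'.inv hq.ne')).const_mul c).add_const (2 * t)).div_const
    (c ^ 2 - t ^ 2)).deriv
  change dS (explicitW c) t s = c * (dS (radicalRatio c) t s + -dS (radicalRatio c) t s / _) / _
    at hderiv
  rw [hderiv]
  field_simp
  grind

lemma dT_explicitW (h : (t, s) ∈ metricDomain c) :
    dT (explicitW c) t s =
      (2 + 2 * t * explicitW c t s) / (c ^ 2 - t ^ 2) -
        c * dT (radicalRatio c) t s / (t * s) := by
  obtain ⟨ht, hs, hD, hP⟩ := mem_metricDomain.1 h
  have hts := mul_pos ht hs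
  have hq2 := radicalRatio_sq_mul hts.le hP
  have hq := radicalRatio_pos hts hP
  have hq' := (hasDerivAt_radicalRatio_left hts hP).differentiableAt.hasDerivAt
  have hderiv := ((((hq'.add (hq'.inv hq.ne')).const_mul c).add
    ((hasDerivAt_id t).const_mul 2)).div (hasDerivAt_sq_sub_sq c t) hD).deriv
  change dT (explicitW c) t s =
    ((c * (dT (radicalRatio c) t s + -dT (radicalRatio c) t s / _) + _) * _ -
      (c * (radicalRatio c t s + (radicalRatio c t s)⁻¹) + 2 * t) * _) / _ at hderiv
  rw [hderiv, explicitW]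
  field_simp
  grind

lemma dS_radicalRatio_ne_zero (h : (t, s) ∈ metricDomain c) : dS (radicalRatio c) t s ≠ 0 := by
  obtain ⟨ht, hs, hD, hP⟩ := mem_metricDomain.1 h
  have hq := radicalRatio_pos (mul_pos ht hs) hP
  rw [dS, (hasDerivAt_radicalRatio_right (mul_pos ht hs) hP).deriv]
  positivity

lemma explicitW_combination_eq_two_mul_factoredMetric (h : (t, s) ∈ metricDomain c) :
    2 * s / (c ^ 2 - t ^ 2) + (2 * t * s / (c ^ 2 - t ^ 2) + 1) * explicitW c t s
        - c * radicalRatio c t s / (t * s)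
      = 2 * factoredMetric c t s := by
  obtain ⟨ht, hs, hD, hP⟩ := mem_metricDomain.1 h
  have hts := mul_pos ht hs
  have hq2 := radicalRatio_sq_mul hts.le hP
  have hq := radicalRatio_pos hts hP
  rw [explicitW, factoredMetric]
  field_simp
  grind

lemma curvature_bracket_eq_two_mul_factoredMetric (hc : c ≠ 0) (h : (t, s) ∈ metricDomain c) :
    s * (dT (explicitW c) t s + dS (explicitW c) t s)
        - s ^ 2 * (t - s) * dS (explicitW c) t s ^ 2 / (c * dS (radicalRatio c) t s)
        + explicitW c t s
      = 2 * factoredMetric c t s := by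
  have hqs := dS_radicalRatio_ne_zero h
  obtain ⟨ht, hs, hD, hP⟩ := mem_metricDomain.1 h
  have hquotient : s ^ 2 * (t - s) * dS (explicitW c) t s ^ 2 / (c * dS (radicalRatio c) t s)
      = c * (t - s) * dS (radicalRatio c) t s / t ^ 2 := by
    rw [dS_explicitW h]
    field_simp
  have htransport := radicalRatio_transport (mul_pos ht hs) hP
  rw [hquotient, ← explicitW_combination_eq_two_mul_factoredMetric h, dT_explicitW h,
    dS_explicitW h]
  field_simp at htransport ⊢
  linear_combination (-c * (c ^ 2 - t ^ 2)) * htransport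

end Metric

theorem stmt14_general (c : ℝ) (hc : 0 < c) (φ : ℝ → ℝ → ℝ)
    (hφ : ∀ t s : ℝ, φ t s =
      (√(t / (c ^ 2 - t ^ 2) + t ^ 2 * s / (c ^ 2 - t ^ 2) ^ 2) +
        √(c ^ 2 * s / (c ^ 2 - t ^ 2) ^ 2)) ^ 2)
    (t s : ℝ) (ht : 0 < t) (hs : 0 < s) (hD : c ^ 2 - t ^ 2 ≠ 0)
    (hP : 0 < c ^ 2 - t ^ 2 + t * s) :
    -(2 / φ t s) *
      (s * (dT (Wf φ) t s + dS (Wf φ) t s)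
        - s ^ 2 * (t - s) * (dS (Wf φ) t s) ^ 2 / dS (Uf φ) t s
        + Wf φ t s) = -4 := by
  have h : (t, s) ∈ metricDomain c := ⟨ht, hs, hD, hP⟩
  have hΩ := isOpen_metricDomain c
  have hfactor : (metricDomain c).EqOn (Function.uncurry φ) (Function.uncurry (factoredMetric c)) :=
    fun p hp => (hφ p.1 p.2).trans (sqrt_add_sqrt_sq_eq_factoredMetric hc.le hp)
  have hU : (metricDomain c).EqOn (Function.uncurry (Uf φ))
      (Function.uncurry fun t s => c * radicalRatio c t s) :=
    (eqOn_Uf hΩ hfactor).trans fun _ hp => Uf_factoredMetric hc.le hp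
  have hW : (metricDomain c).EqOn (Function.uncurry (Wf φ)) (Function.uncurry (explicitW c)) :=
    (eqOn_Wf hΩ hfactor).trans fun _ hp => Wf_factoredMetric hc.le hp
  have hUs : dS (Uf φ) t s = c * dS (radicalRatio c) t s :=
    (eqOn_dS hΩ hU h).trans (deriv_const_mul_field c)
  have hWs : dS (Wf φ) t s = dS (explicitW c) t s := eqOn_dS hΩ hW h
  have hWt : dT (Wf φ) t s = dT (explicitW c) t s := eqOn_dT hΩ hW h
  have hWts : Wf φ t s = explicitW c t s := hW h
  have hφts : φ t s = factoredMetric c t s := hfactor h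
  have hφ_ne := (factoredMetric_pos hc.le h).ne'
  rw [hUs, hWs, hWt, hWts, hφts, curvature_bracket_eq_two_mul_factoredMetric hc.ne' h]
  field_simp
  norm_num

theorem stmt14 (c : ℝ) (hc : 0 < c)
    (φ : ℝ → ℝ → ℝ)
    (hφ : ∀ t s : ℝ, φ t s =
      (Real.sqrt (t / (c ^ 2 - t ^ 2) + t ^ 2 * s / (c ^ 2 - t ^ 2) ^ 2) +
        Real.sqrt (c ^ 2 * s / (c ^ 2 - t ^ 2) ^ 2)) ^ 2)
    (t s : ℝ) (hs : 0 < s) (hst : s < t) (htc : t < c) :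
    -(2 / φ t s) *
      (s * (dT (Wf φ) t s + dS (Wf φ) t s)
        - s ^ 2 * (t - s) * (dS (Wf φ) t s) ^ 2 / dS (Uf φ) t s
        + Wf φ t s) = -4 := by
  have ht := hs.trans hst
  have hD : 0 < c ^ 2 - t ^ 2 := sub_pos.2 (pow_lt_pow_left₀ htc ht.le two_ne_zero)
  exact stmt14_general c hc φ hφ t s ht hs hD.ne' (add_pos hD (mul_pos ht hs))
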